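/- arXiv:2408.06616 — 2 statements merged into one kernel-verified Lean document; each statement's English description precedes it below -/
import Mathlib

section
/- For all 0 ≤ i, k ≤ 3 and 0 ≤ j, l ≤ 2, the Poincaré pairing on the basis elements is given by ⟨T_{ij}, T_{kl}⟩ = 1 if (i+k, j+l) ∈ {(3,2), (2,3)}, and ⟨T_{ij}, T_{kl}⟩ = 0 otherwise. -/
/-!
Since `T i j * T k l = T (i + k) (j + l)`, the pairing is the value of the functional on monomials
`T m n` with `n ≤ 4`. These reduce to basis elements by three rewriting rules in `R`:
`T m n = 0` for `m ≥ 4`, `T m 3 = T (m + 1) 2 - T (m + 2) 1 + T (m + 3) 0`, and `T m 4 = 0`.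
The last holds because `H⁴ - a⁴ = (H + a) (H³ - aH² + a²H - a³)`, so `H⁴ = a⁴ = 0` in `R`.
The only reduction that meets `T 3 2`, apart from `T 3 2` itself, is that of `T 2 3`.
-/

open MvPolynomial

noncomputable section

/-- The polynomial ring `ℚ[a, H]` in two variables. -/
abbrev P : Type := MvPolynomial (Fin 2) ℚ

/-- The variable `a` (hyperplane class of the Grassmannian). -/
def aP : P := X 0

/-- The variable `H` (pullback of the hyperplane class of `ℙ³`). -/
def HP : P := X 1

/-- The ideal `(a⁴, H³ − aH² + a²H − a³)`. -/
def J : Ideal P := Ideal.span {aP ^ 4, HP ^ 3 - aP * HP ^ 2 + aP ^ 2 * HP - aP ^ 3}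

/-- The cohomology ring `R = ℚ[a,H]/(a⁴, H³ − aH² + a²H − a³)`. -/
abbrev R : Type := P ⧸ J

/-- `T i j` is the image of `aⁱHʲ` in `R`. -/
def T (i j : ℕ) : R := Ideal.Quotient.mk J (aP ^ i * HP ^ j)

theorem T_mul (i j k l : ℕ) : T i j * T k l = T (i + k) (j + l) := by
  unfold T
  rw [← map_mul]
  congr 1
  ring

theorem aP_pow_four_mem : aP ^ 4 ∈ J := Ideal.subset_span (by simp)

theorem cubic_mem : HP ^ 3 - aP * HP ^ 2 + aP ^ 2 * HP - aP ^ 3 ∈ J :=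
  Ideal.subset_span (by simp)

theorem T_eq_zero_of_four_le (m n : ℕ) (hm : 4 ≤ m) : T m n = 0 := by
  obtain ⟨d, rfl⟩ := Nat.exists_eq_add_of_le hm
  refine Ideal.Quotient.eq_zero_iff_mem.2 ?_
  convert J.mul_mem_left (aP ^ d * HP ^ n) aP_pow_four_mem using 1
  ring

theorem T_three (m : ℕ) : T m 3 = T (m + 1) 2 - T (m + 2) 1 + T (m + 3) 0 := by
  unfold T
  rw [← map_sub, ← map_add]
  refine Ideal.Quotient.eq.2 ?_
  convert J.mul_mem_left (aP ^ m) cubic_mem using 1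
  ring

theorem T_four (m : ℕ) : T m 4 = 0 := by
  refine Ideal.Quotient.eq_zero_iff_mem.2 ?_
  convert J.add_mem (J.mul_mem_left (aP ^ m * (HP + aP)) cubic_mem)
    (J.mul_mem_left (aP ^ m) aP_pow_four_mem) using 1
  ring

/-- **Poincaré pairing on the basis.** Assuming the `T i j` (`i ≤ 3`, `j ≤ 2`)
form a `ℚ`-basis of `R`, and `Int : R →ₗ[ℚ] ℚ` is the linear functional with
`Int (T 3 2) = 1` and `Int (T i j) = 0` otherwise, the Poincaré pairing
`⟨x, y⟩ = Int (x * y)` satisfies `⟨T i j, T k l⟩ = 1` iff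
`(i + k, j + l) ∈ {(3,2), (2,3)}`, and `0` otherwise. -/
theorem poincare_pairing_on_basis
    (hli : LinearIndependent ℚ (fun p : Fin 4 × Fin 3 => T p.1.val p.2.val))
    (hsp : Submodule.span ℚ (Set.range fun p : Fin 4 × Fin 3 => T p.1.val p.2.val) = ⊤)
    (Int : R →ₗ[ℚ] ℚ)
    (hInt : ∀ i j, i ≤ 3 → j ≤ 2 →
      Int (T i j) = if i = 3 ∧ j = 2 then 1 else 0) :
    ∀ i k j l, i ≤ 3 → k ≤ 3 → j ≤ 2 → l ≤ 2 →
      Int (T i j * T k l) =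
        if (i + k = 3 ∧ j + l = 2) ∨ (i + k = 2 ∧ j + l = 3) then 1 else 0 := by
  intro i k j l hi hk hj hl
  rw [T_mul]
  have hn : j + l ≤ 4 := by omega
  generalize i + k = m
  generalize j + l = n at hn
  -- The value on any `T m 2`, `T m 1`, `T m 0`, with no bound on `m`.
  have key : ∀ m n, n ≤ 2 → Int (T m n) = if m = 3 ∧ n = 2 then 1 else 0 := by
    intro m n hn
    by_cases hm : m ≤ 3
    · exact hInt m n hm hn
    · rw [T_eq_zero_of_four_le m n (by omega), map_zero, if_neg (by omega)]
  obtain h | rfl | rfl : n ≤ 2 ∨ n = 3 ∨ n = 4 := by omega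
  · rw [key m n h]
    congr 1
    simp only [eq_iff_iff]
    omega
  · rw [T_three, map_add, map_sub, key _ 2 (by omega), key _ 1 (by omega), key _ 0 (by omega)]
    simp
  · rw [T_four, map_zero, if_neg (by omega)]

end
end

section
/- Define T^{ij} := T_{3−i,2−j} − T_{4−i,1−j} + T_{5−i,−j} in R, with the convention that T_{pq} = 0 whenever p > 3 or q < 0. Then {T^{ij}} is the dual basis of {T_{ij}} with respect to the Poincaré pairing: for all 0 ≤ i, k ≤ 3 and 0 ≤ j, l ≤ 2, ⟨T_{ij}, T^{kl}⟩ = 1 if (i,j) = (k,l) and 0 otherwise. -/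
/-!
Over `A = ℚ[a]/(a⁴)` the ring `R` is free on `1, H, H²`, and the pairing is the residue pairing of
the monic polynomial `H³ - aH² + a²H - a³`. The `A`-dual basis of `1, H, H²` is therefore given by
the Horner quotients `H² - aH + a²`, `H - a`, `1`, and `Tdual k l` is `a³⁻ᵏ` times the `l`-th of
these. Concretely, every product `T i j * Tdual k l` is a combination of monomials `T m n` with
`n ≤ 4`, and the integral of each of them is known: `T_eq_zero` handles `m ≥ 4`, while
`T_add_three` and `T_four_right` handle `n = 3, 4`.
-/

open MvPolynomial

noncomputable section

/-- `Tz p q` is the image of `aᵖHᑫ` in `R` for integer exponents, with the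
convention that it is `0` whenever `p > 3` or `q < 0`. -/
def Tz (p q : ℤ) : R :=
  if 3 < p ∨ q < 0 then 0 else Ideal.Quotient.mk J (aP ^ p.toNat * HP ^ q.toNat)

/-- `Tdual i j = T_{3−i,2−j} − T_{4−i,1−j} + T_{5−i,−j}` (with the convention
`T_{pq} = 0` for `p > 3` or `q < 0`). -/
def Tdual (i j : ℕ) : R :=
  Tz (3 - (i : ℤ)) (2 - (j : ℤ)) - Tz (4 - (i : ℤ)) (1 - (j : ℤ))
    + Tz (5 - (i : ℤ)) (-(j : ℤ))

theorem T_eq_zero {i : ℕ} (hi : 4 ≤ i) (j : ℕ) : T i j = 0 := by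
  obtain ⟨m, rfl⟩ := Nat.exists_eq_add_of_le hi
  refine Ideal.Quotient.eq_zero_iff_mem.mpr ?_
  have h : aP ^ 4 ∈ J := Ideal.subset_span (by simp)
  have h' := J.mul_mem_left (aP ^ m * HP ^ j) h
  convert h' using 1
  ring

/-- The relation `H³ = aH² - a²H + a³`, multiplied by `aⁱHʲ`. -/
theorem T_add_three (i j : ℕ) :
    T i (j + 3) = T (i + 1) (j + 2) - T (i + 2) (j + 1) + T (i + 3) j := by
  simp only [T, ← map_sub, ← map_add]
  refine Ideal.Quotient.eq.mpr ?_
  have h : HP ^ 3 - aP * HP ^ 2 + aP ^ 2 * HP - aP ^ 3 ∈ J := Ideal.subset_span (by simp)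
  have h' := J.mul_mem_left (aP ^ i * HP ^ j) h
  convert h' using 1
  ring

/-- The defining cubic times `H + a` is `H⁴ - a⁴`, so `H⁴ = a⁴ = 0` in `R`. -/
theorem T_four_right (i : ℕ) : T i 4 = 0 := by
  rw [T_add_three i 1, T_add_three (i + 1) 0, T_eq_zero (i := i + 1 + 3) (by omega)]
  simp only [add_assoc, Nat.reduceAdd]
  ring

theorem Tz_eq_T {p q : ℤ} {m n : ℕ} (hp : p = m) (hq : q = n) : Tz p q = T m n := by
  subst hp hq
  unfold Tz
  split_ifs with h
  · exact (T_eq_zero (by omega) n).symm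
  · simp [T]

theorem Tz_of_neg (p : ℤ) {q : ℤ} (hq : q < 0) : Tz p q = 0 := by
  simp [Tz, hq]

theorem Tdual_zero {k : ℕ} (hk : k ≤ 3) :
    Tdual k 0 = T (3 - k) 2 - T (4 - k) 1 + T (5 - k) 0 := by
  unfold Tdual
  rw [Tz_eq_T (m := 3 - k) (n := 2), Tz_eq_T (m := 4 - k) (n := 1),
    Tz_eq_T (m := 5 - k) (n := 0)] <;> omega

theorem Tdual_one {k : ℕ} (hk : k ≤ 3) :
    Tdual k 1 = T (3 - k) 1 - T (4 - k) 0 := by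
  unfold Tdual
  rw [Tz_eq_T (m := 3 - k) (n := 1), Tz_eq_T (m := 4 - k) (n := 0), Tz_of_neg, add_zero]
    <;> omega

theorem Tdual_two {k : ℕ} (hk : k ≤ 3) : Tdual k 2 = T (3 - k) 0 := by
  unfold Tdual
  rw [Tz_eq_T (m := 3 - k) (n := 0), Tz_of_neg, Tz_of_neg, add_zero, sub_zero] <;> omega

/-- **The elements `Tdual i j` form the dual basis of `{T i j}` with respect to
the Poincaré pairing:** `⟨T i j, Tdual k l⟩ = 1` if `(i,j) = (k,l)` and `0`
otherwise. -/
theorem dual_basis_poincare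
    (hli : LinearIndependent ℚ (fun p : Fin 4 × Fin 3 => T p.1.val p.2.val))
    (hsp : Submodule.span ℚ (Set.range fun p : Fin 4 × Fin 3 => T p.1.val p.2.val) = ⊤)
    (Int : R →ₗ[ℚ] ℚ)
    (hInt : ∀ i j, i ≤ 3 → j ≤ 2 →
      Int (T i j) = if i = 3 ∧ j = 2 then 1 else 0) :
    ∀ i k j l, i ≤ 3 → k ≤ 3 → j ≤ 2 → l ≤ 2 →
      Int (T i j * Tdual k l) = if i = k ∧ j = l then 1 else 0 := by
  -- Since `T m n` vanishes for `m > 3`, the formula for the integral extends to every `m`.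
  have I (m n : ℕ) (hn : n ≤ 2) : Int (T m n) = if m = 3 ∧ n = 2 then 1 else 0 := by
    by_cases hm : m ≤ 3
    · exact hInt m n hm hn
    · rw [T_eq_zero (by omega), map_zero, if_neg (by omega)]
  have I0 (m : ℕ) : Int (T m 0) = 0 := by simp [I]
  have I1 (m : ℕ) : Int (T m 1) = 0 := by simp [I]
  have I2 (m : ℕ) : Int (T m 2) = if m = 3 then 1 else 0 := by simp [I]
  have I3 (m : ℕ) : Int (T m 3) = if m = 2 then 1 else 0 := by
    rw [T_add_three m 0]
    simp [I0, I1, I2]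
  have I4 (m : ℕ) : Int (T m 4) = 0 := by rw [T_four_right, map_zero]
  intro i k j l hi hk hj hl
  interval_cases l <;> interval_cases j <;>
    simp only [Tdual_zero hk, Tdual_one hk, Tdual_two hk, mul_add, mul_sub, T_mul, map_add,
      map_sub, Nat.reduceAdd, I0, I1, I2, I3, I4] <;>
    grind

end
end
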